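/- Let G be a negative definite symmetric integer matrix on a finite set V whose off-diagonal entries lie in {0,1} and whose associated graph is a forest. Let K be a characteristic vector, E ⊆ V, and let u, v be vertices lying in the same tree with u ∈ E. Let u₁, …, u_m be the neighbors of u that are farther from v than u (i.e., not on the path from u to v; if u = v, all neighbors of u), and let γ_u^v[K,E] be the number of indices i with Δ_{u_i}^v[K,E] < 0 (with the convention that Δ_w^v[K,E] = +∞ when w ∉ E, so such u_i are not counted). Then Δ_u^v[K,E] = f([K,{u}]) + γ_u^v[K,E]. -/

import Mathlib

/-!
Root the tree of `v` at `v`, and write `D_w` for the members of `E` descending from `w`. Since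
`f([K,I])` is a sum of weights over the vertices of `I` plus the number of edges inside `I`, it is
additive over sets with no edge between them. Apart from `u` itself, `E_u^v` is the disjoint union
of the `D_w` over the children `w` of `u`; distinct `D_w` are not joined by edges, and the only
possible neighbor of `u` in `D_w` is `w`. Hence both minima defining `Δ_u^v` split as sums over the
children (`subsetMin_biUnion`). A child outside `E` contributes equally to both. For a child `w` in
`E`, the minimum without `u` has the summand `min A_w B_w`, the one with `u` has the summand
`min A_w (B_w + 1)`; there is also the constant `f([K,{u}])` in the latter. As `f` takes integer
values for a characteristic `K` (`fKI_int`), the two summands differ by `1` if `B_w < A_w` and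
agree otherwise (`subsetMin_child`).

The combinatorics of the rooted forest is phrased through the relation `onPath Γ x v w`, that is,
`w` is an ancestor of `x`; on the tree of `v` it is a partial order in which the ancestors of a
vertex form a chain.
-/

open Matrix Finset

variable {V : Type*}

/-- Negative definiteness of a symmetric integer matrix, as a quadratic form over `ℚ`. -/
def MatNegDef [Fintype V] (G : Matrix V V ℤ) : Prop :=
  ∀ x : V → ℚ, x ≠ 0 → x ⬝ᵥ (G.map (Int.cast : ℤ → ℚ)).mulVec x < 0

/-- `K` is a characteristic vector for `G`: `K v ≡ G v v (mod 2)` for all `v`. -/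
def IsCharacteristic [Fintype V] (G : Matrix V V ℤ) (K : V → ℤ) : Prop :=
  ∀ v : V, (2 : ℤ) ∣ (K v - G v v)

/-- The translate `K + x` of a characteristic vector by `x : V → ℤ`. -/
def chTrans [Fintype V] (G : Matrix V V ℤ) (K : V → ℤ) (x : V → ℤ) : V → ℤ :=
  fun u => K u + 2 * G.mulVec x u

/-- `i` times the standard basis vector at `v`. -/
def dirVec [DecidableEq V] (v : V) (i : ℤ) : V → ℤ := fun u => if u = v then i else 0

/-- The height function `h_U(K) = (Kᵀ G⁻¹ K + s)/4`. -/
noncomputable def hU [Fintype V] [DecidableEq V] (G : Matrix V V ℤ) (K : V → ℤ) : ℚ :=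
  ((fun u => (K u : ℚ)) ⬝ᵥ ((G.map (Int.cast : ℤ → ℚ))⁻¹).mulVec (fun u => (K u : ℚ))
      + (Fintype.card V : ℚ)) / 4

/-- The height of a cube: `h_U([K,E]) = min_{I ⊆ E} h_U(K + Σ_{v ∈ I} e_v)`. -/
noncomputable def hUcube [Fintype V] [DecidableEq V] (G : Matrix V V ℤ) (K : V → ℤ)
    (E : Finset V) : ℚ :=
  E.powerset.inf' (Finset.powerset_nonempty _)
    (fun I => hU G (chTrans G K (fun u => if u ∈ I then (1 : ℤ) else 0)))

/-- `f([K,I]) = ((Σ_{v∈I} K v) + x_Iᵀ G x_I)/2`. -/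
noncomputable def fKI [Fintype V] [DecidableEq V] (G : Matrix V V ℤ) (K : V → ℤ)
    (I : Finset V) : ℚ :=
  (((∑ u ∈ I, K u) +
      (fun u => if u ∈ I then (1 : ℤ) else 0) ⬝ᵥ
        G.mulVec (fun u => if u ∈ I then (1 : ℤ) else 0) : ℤ) : ℚ) / 2

/-- `A_v[K,E] = min_{I ⊆ E∖{v}} f([K,I])`. -/
noncomputable def Av [Fintype V] [DecidableEq V] (G : Matrix V V ℤ) (K : V → ℤ)
    (w : V) (E : Finset V) : ℚ :=
  ((E.erase w).powerset).inf' (Finset.powerset_nonempty _) (fun I => fKI G K I)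

/-- `B_v[K,E] = min_{v ∈ I ⊆ E} f([K,I])`. -/
noncomputable def Bv [Fintype V] [DecidableEq V] (G : Matrix V V ℤ) (K : V → ℤ)
    (w : V) (E : Finset V) : ℚ :=
  ((E.erase w).powerset).inf' (Finset.powerset_nonempty _) (fun I => fKI G K (insert w I))

/-- The graph of `G`: an edge between `u ≠ w` exactly when `G u w = 1`. -/
def graphOf (G : Matrix V V ℤ) : SimpleGraph V :=
  SimpleGraph.fromRel (fun u w => G u w = 1)

/-- The (unique, in a forest) path from `x` to `v` passes through `u`. -/
def onPath (Γ : SimpleGraph V) (x v u : V) : Prop :=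
  ∃ p : Γ.Walk x v, p.IsPath ∧ u ∈ p.support

/-- `E_u^v`: the elements of `E` whose path to `v` passes through `u`. -/
noncomputable def Esub (Γ : SimpleGraph V) (E : Finset V) (u v : V) : Finset V :=
  @Finset.filter _ (fun x => onPath Γ x v u) (Classical.decPred _) E

/-- `Δ_w[K,E] = B_w[K,E] − A_w[K,E]`, with value `+∞` when `w ∉ E`. -/
noncomputable def DeltaTop [Fintype V] [DecidableEq V] (G : Matrix V V ℤ) (K : V → ℤ)
    (w : V) (E : Finset V) : WithTop ℚ :=
  if w ∈ E then ((Bv G K w E - Av G K w E : ℚ) : WithTop ℚ) else ⊤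

/-! ### The ancestor order of a forest -/

namespace RecursiveDelta

section Forest

variable {Γ : SimpleGraph V} {v w x y u : V}

lemma onPath_self (h : Γ.Reachable x v) : onPath Γ x v x := by
  obtain ⟨p, hp⟩ := h.exists_isPath
  exact ⟨p, hp, p.start_mem_support⟩

lemma mem_of_onPath (hΓ : Γ.IsAcyclic) (h : onPath Γ x v w) (p : Γ.Walk x v) (hp : p.IsPath) :
    w ∈ p.support := by
  obtain ⟨q, hq, hw⟩ := h
  have := congrArg Subtype.val
    ((hΓ.subsingleton_path x v).elim (⟨p, hp⟩ : Γ.Path x v) ⟨q, hq⟩)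
  change p = q at this
  rwa [this]

lemma onPath_trans [DecidableEq V] (hΓ : Γ.IsAcyclic) (h₁ : onPath Γ x v w)
    (h₂ : onPath Γ w v y) : onPath Γ x v y := by
  obtain ⟨p, hp, hw⟩ := h₁
  exact ⟨p, hp, p.support_dropUntil_subset_support hw
    (mem_of_onPath hΓ h₂ _ (hp.dropUntil hw))⟩

/-- The initial and the final segment of a path meet only in the cutting vertex. -/
lemma eq_of_mem_take_drop [DecidableEq V] {p : Γ.Walk x v} (hp : p.IsPath) (hw : w ∈ p.support)
    (h₁ : y ∈ (p.takeUntil w hw).support) (h₂ : y ∈ (p.dropUntil w hw).support) : y = w := by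
  by_contra hne
  have h := hp.support_nodup
  rw [← p.take_spec hw, SimpleGraph.Walk.support_append] at h
  have h₃ : y ∈ (p.dropUntil w hw).support.tail := by
    rw [SimpleGraph.Walk.mem_support_iff] at h₂
    exact h₂.resolve_left hne
  exact (List.nodup_append.1 h).2.2 y h₁ y h₃ rfl

lemma onPath_antisymm [DecidableEq V] (hΓ : Γ.IsAcyclic) (h₁ : onPath Γ x v w)
    (h₂ : onPath Γ w v x) : x = w := by
  obtain ⟨p, hp, hw⟩ := h₁
  exact eq_of_mem_take_drop hp hw (SimpleGraph.Walk.start_mem_support _)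
    (mem_of_onPath hΓ h₂ _ (hp.dropUntil hw))

/-- The ancestors of a vertex form a chain. -/
lemma onPath_total [DecidableEq V] (h₁ : onPath Γ x v w) (hΓ : Γ.IsAcyclic)
    (h₂ : onPath Γ x v y) : onPath Γ w v y ∨ onPath Γ y v w := by
  obtain ⟨p, hp, hw⟩ := h₁
  have hy := mem_of_onPath hΓ h₂ p hp
  have hy' := hy
  rw [← p.take_spec hw, SimpleGraph.Walk.mem_support_append_iff] at hy'
  rcases hy' with h | h
  · right
    have hq : ((p.takeUntil w hw).append (p.dropUntil w hw)).IsPath := by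
      rwa [p.take_spec hw]
    have e : (p.takeUntil w hw).append (p.dropUntil w hw) =
        ((p.takeUntil w hw).takeUntil y h).append
          (((p.takeUntil w hw).dropUntil y h).append (p.dropUntil w hw)) := by
      rw [SimpleGraph.Walk.append_assoc, (p.takeUntil w hw).take_spec h]
    rw [e] at hq
    refine ⟨_, hq.of_append_right, ?_⟩
    rw [SimpleGraph.Walk.mem_support_append_iff]
    exact Or.inr (SimpleGraph.Walk.start_mem_support _)
  · exact Or.inl ⟨_, hp.dropUntil hw, h⟩

/-- Of two adjacent vertices in the tree of `v`, one is an ancestor of the other. -/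
lemma onPath_of_adj (h : Γ.Reachable x v) (ha : Γ.Adj x y) :
    onPath Γ x v y ∨ onPath Γ y v x := by
  obtain ⟨p, hp⟩ := h.exists_isPath
  by_cases hy : y ∈ p.support
  · exact Or.inl ⟨p, hp, hy⟩
  · exact Or.inr ⟨SimpleGraph.Walk.cons ha.symm p, hp.cons hy, by simp⟩

/-- A proper ancestor of a child `w` of `u` is an ancestor of `u`. -/
lemma onPath_of_child [DecidableEq V] (hΓ : Γ.IsAcyclic) (ha : Γ.Adj u w) (h : onPath Γ w v u)
    (hy : onPath Γ w v y) (hne : y ≠ w) : onPath Γ u v y := by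
  obtain ⟨p, hp, hu⟩ := h
  have hq := hp.dropUntil hu
  have hw : w ∉ (p.dropUntil u hu).support := fun hw =>
    ha.ne' (eq_of_mem_take_drop hp hu (SimpleGraph.Walk.start_mem_support _) hw)
  have := mem_of_onPath hΓ hy (SimpleGraph.Walk.cons ha.symm (p.dropUntil u hu)) (hq.cons hw)
  rw [SimpleGraph.Walk.support_cons, List.mem_cons] at this
  exact ⟨_, hq, this.resolve_left hne⟩

lemma child_unique [DecidableEq V] (hΓ : Γ.IsAcyclic)
    (ha : Γ.Adj u w) (h : onPath Γ w v u) (ha' : Γ.Adj u y) (h' : onPath Γ y v u)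
    (hx : onPath Γ x v w) (hx' : onPath Γ x v y) : w = y := by
  by_contra hne
  rcases onPath_total hx hΓ hx' with h₁ | h₁
  · exact ha'.ne (onPath_antisymm hΓ (onPath_of_child hΓ ha h h₁ (Ne.symm hne)) h')
  · exact ha.ne (onPath_antisymm hΓ (onPath_of_child hΓ ha' h' h₁ hne) h)

/-- A proper descendant of `u` descends from some child of `u`. -/
lemma exists_child [DecidableEq V] (h : onPath Γ x v u) (hne : x ≠ u) :
    ∃ w, Γ.Adj u w ∧ onPath Γ w v u ∧ onPath Γ x v w := by
  obtain ⟨p, hp, hu⟩ := h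
  have hnil : ¬ (p.takeUntil u hu).Nil := SimpleGraph.Walk.not_nil_of_ne hne
  have ha := (p.takeUntil u hu).adj_penultimate hnil
  have hm : (p.takeUntil u hu).penultimate ∈ (p.takeUntil u hu).support :=
    SimpleGraph.Walk.getVert_mem_support _ _
  refine ⟨_, ha.symm, ⟨SimpleGraph.Walk.cons ha (p.dropUntil u hu),
    (hp.dropUntil hu).cons fun hw => ha.ne (eq_of_mem_take_drop hp hu hm hw), by simp⟩,
    ⟨p, hp, p.support_takeUntil_subset_support hu hm⟩⟩

end Forest

/-! ### Additivity and integrality of `f` -/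

section Weight

variable [Fintype V] [DecidableEq V] {G : Matrix V V ℤ} {K : V → ℤ}

lemma fKI_eq (G : Matrix V V ℤ) (K : V → ℤ) (I : Finset V) :
    fKI G K I = ((∑ i ∈ I, (K i : ℚ)) + ∑ i ∈ I, ∑ j ∈ I, (G i j : ℚ)) / 2 := by
  unfold fKI
  congr 1
  push_cast
  congr 1
  simp [dotProduct, Matrix.mulVec, Finset.sum_ite_mem]

lemma fKI_union (hsym : G.IsSymm) {I J : Finset V} (hd : Disjoint I J) :
    fKI G K (I ∪ J) = fKI G K I + fKI G K J + ∑ i ∈ I, ∑ j ∈ J, (G i j : ℚ) := by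
  have hc : ∑ i ∈ J, ∑ j ∈ I, (G i j : ℚ) = ∑ i ∈ I, ∑ j ∈ J, (G i j : ℚ) := by
    rw [Finset.sum_comm]
    refine Finset.sum_congr rfl fun i _ => Finset.sum_congr rfl fun j _ => ?_
    rw [hsym.apply]
  simp only [fKI_eq, Finset.sum_union hd, Finset.sum_add_distrib]
  rw [hc]
  ring

lemma fKI_insert (hsym : G.IsSymm) {I : Finset V} {a : V} (ha : a ∉ I) :
    fKI G K (insert a I) = fKI G K {a} + fKI G K I + ∑ j ∈ I, (G a j : ℚ) := by
  rw [Finset.insert_eq, fKI_union hsym (Finset.disjoint_singleton_left.2 ha),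
    Finset.sum_singleton]

lemma fKI_int (hsym : G.IsSymm) (hK : IsCharacteristic G K) (I : Finset V) :
    ∃ n : ℤ, fKI G K I = n := by
  induction I using Finset.induction_on with
  | empty => exact ⟨0, by simp [fKI_eq]⟩
  | insert a I ha ih =>
    obtain ⟨n, hn⟩ := ih
    obtain ⟨k, hk⟩ := hK a
    refine ⟨k + G a a + n + ∑ j ∈ I, G a j, ?_⟩
    have hk' : (K a : ℚ) = 2 * k + G a a := by
      have : K a = 2 * k + G a a := by omega
      exact_mod_cast this
    rw [fKI_insert hsym ha, hn, fKI_eq]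
    push_cast
    simp only [Finset.sum_singleton, hk']
    ring

end Weight

/-! ### Minima over the subsets of a set -/

section Minima

/-- The minimum of `h` over all subsets of `S`. -/
noncomputable def subsetMin (h : Finset V → ℚ) (S : Finset V) : ℚ :=
  S.powerset.inf' (Finset.powerset_nonempty _) h

lemma subsetMin_le {h : Finset V → ℚ} {S I : Finset V} (hI : I ⊆ S) : subsetMin h S ≤ h I :=
  Finset.inf'_le _ (Finset.mem_powerset.2 hI)

lemma exists_subsetMin (h : Finset V → ℚ) (S : Finset V) : ∃ I ⊆ S, subsetMin h S = h I := by
  obtain ⟨I, hI, e⟩ := Finset.exists_mem_eq_inf' (Finset.powerset_nonempty S) h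
  exact ⟨I, Finset.mem_powerset.1 hI, e⟩

lemma subsetMin_congr {h h' : Finset V → ℚ} {S : Finset V} (e : ∀ I ⊆ S, h I = h' I) :
    subsetMin h S = subsetMin h' S :=
  Finset.inf'_congr _ rfl fun I hI => e I (Finset.mem_powerset.1 hI)

lemma subsetMin_add_const (h : Finset V → ℚ) (c : ℚ) (S : Finset V) :
    subsetMin (fun I => c + h I) S = c + subsetMin h S := by
  obtain ⟨I, hI, e⟩ := exists_subsetMin h S
  obtain ⟨J, hJ, e'⟩ := exists_subsetMin (fun I => c + h I) S
  have h₁ := subsetMin_le (h := h) hJ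
  have h₂ := subsetMin_le (h := fun I => c + h I) hI
  linarith

variable [DecidableEq V]

lemma subsetMin_union {h : Finset V → ℚ} {S T : Finset V}
    (hadd : ∀ I ⊆ S, ∀ J ⊆ T, h (I ∪ J) = h I + h J) :
    subsetMin h (S ∪ T) = subsetMin h S + subsetMin h T := by
  apply le_antisymm
  · obtain ⟨I, hI, e⟩ := exists_subsetMin h S
    obtain ⟨J, hJ, e'⟩ := exists_subsetMin h T
    rw [e, e', ← hadd I hI J hJ]
    exact subsetMin_le (Finset.union_subset_union hI hJ)
  · obtain ⟨I, hI, e⟩ := exists_subsetMin h (S ∪ T)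
    have : I = (I ∩ S) ∪ (I ∩ T) := by
      rw [← Finset.inter_union_distrib_left, Finset.inter_eq_left.2 hI]
    rw [e, this, hadd _ Finset.inter_subset_right _ Finset.inter_subset_right]
    exact add_le_add (subsetMin_le Finset.inter_subset_right)
      (subsetMin_le Finset.inter_subset_right)

/-- If `h` is additive over pairs of sets related by `R`, and distinct members of a family are
elementwise `R`-related, then the minimum of `h` over the union of the family is the sum of the
minima. -/
lemma subsetMin_biUnion {h : Finset V → ℚ} {R : V → V → Prop} (h0 : h ∅ = 0)
    (hadd : ∀ I J : Finset V, (∀ i ∈ I, ∀ j ∈ J, R i j) → h (I ∪ J) = h I + h J)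
    (D : V → Finset V) (W : Finset V)
    (hD : ∀ w ∈ W, ∀ w' ∈ W, w ≠ w' → ∀ i ∈ D w, ∀ j ∈ D w', R i j) :
    subsetMin h (W.biUnion D) = ∑ w ∈ W, subsetMin h (D w) := by
  induction W using Finset.induction_on with
  | empty =>
    obtain ⟨I, hI, e⟩ := exists_subsetMin h (∅ : Finset V)
    rw [Finset.subset_empty.1 hI, h0] at e
    simpa using e
  | insert a W ha ih =>
    rw [Finset.biUnion_insert, Finset.sum_insert ha, subsetMin_union, ih]
    · exact fun w hw w' hw' => hD w (Finset.mem_insert_of_mem hw) w' (Finset.mem_insert_of_mem hw')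
    · intro I hI J hJ
      refine hadd I J fun i hi j hj => ?_
      obtain ⟨w, hw, hjw⟩ := Finset.mem_biUnion.1 (hJ hj)
      exact hD a (Finset.mem_insert_self _ _) w (Finset.mem_insert_of_mem hw)
        (fun e => ha (e ▸ hw)) i (hI hi) j hjw

/-- Splitting the subsets of `S` according to whether they contain `w`. -/
lemma subsetMin_split (h : Finset V → ℚ) {S : Finset V} {w : V} (hw : w ∈ S) :
    subsetMin h S =
      min (subsetMin h (S.erase w)) (subsetMin (fun I => h (insert w I)) (S.erase w)) := by
  apply le_antisymm
  · obtain ⟨I, hI, e⟩ := exists_subsetMin h (S.erase w)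
    obtain ⟨J, hJ, e'⟩ := exists_subsetMin (fun I => h (insert w I)) (S.erase w)
    rw [e, e']
    exact le_min (subsetMin_le (hI.trans (Finset.erase_subset _ _)))
      (subsetMin_le (Finset.insert_subset hw (hJ.trans (Finset.erase_subset _ _))))
  · obtain ⟨I, hI, e⟩ := exists_subsetMin h S
    rw [e]
    by_cases hwI : w ∈ I
    · refine (min_le_right _ _).trans ?_
      have := subsetMin_le (h := fun I => h (insert w I)) (Finset.erase_subset_erase w hI)
      simpa only [Finset.insert_erase hwI] using this
    · exact (min_le_left _ _).trans (subsetMin_le (Finset.subset_erase.2 ⟨hI, hwI⟩))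

end Minima

/-! ### The contribution of one child -/

section Child

variable [Fintype V] [DecidableEq V] {G : Matrix V V ℤ} {K : V → ℤ}

/-- Attaching a vertex `u` joined to `S` only through `w` raises the minimum of `f` by `1` if
`Δ_w < 0`, and does not change it otherwise. -/
lemma subsetMin_child (hsym : G.IsSymm) (hK : IsCharacteristic G K) {u w : V} {S : Finset V}
    (hw1 : G u w = 1) (hS : ∀ x ∈ S, x ≠ w → G u x = 0) [Decidable (DeltaTop G K w S < 0)] :
    subsetMin (fun I => fKI G K I + ∑ j ∈ I, (G u j : ℚ)) S =
      subsetMin (fKI G K) S + if DeltaTop G K w S < 0 then 1 else 0 := by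
  have hz : ∀ I ⊆ S.erase w, ∑ j ∈ I, (G u j : ℚ) = 0 := fun I hI =>
    Finset.sum_eq_zero fun j hj => by
      have := Finset.mem_erase.1 (hI hj)
      rw [hS j this.2 this.1, Int.cast_zero]
  by_cases hw : w ∈ S
  · have hA : subsetMin (fun I => fKI G K I + ∑ j ∈ I, (G u j : ℚ)) (S.erase w) = Av G K w S :=
      subsetMin_congr fun I hI => by rw [hz I hI, add_zero]
    have hB : subsetMin (fun I => fKI G K (insert w I) + ∑ j ∈ insert w I, (G u j : ℚ)) (S.erase w)
        = 1 + Bv G K w S := by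
      refine (subsetMin_congr fun I hI => ?_).trans
        (subsetMin_add_const (fun I => fKI G K (insert w I)) 1 (S.erase w))
      have hwI : w ∉ I := fun h => (Finset.mem_erase.1 (hI h)).1 rfl
      rw [Finset.sum_insert hwI, hz I hI, hw1]
      push_cast
      ring
    rw [subsetMin_split _ hw, hA, hB, subsetMin_split _ hw]
    change _ = min (Av G K w S) (Bv G K w S) + _
    have hΔ : DeltaTop G K w S < 0 ↔ Bv G K w S < Av G K w S := by
      rw [DeltaTop, if_pos hw, ← WithTop.coe_zero, WithTop.coe_lt_coe, sub_neg]
    obtain ⟨a, ha⟩ : ∃ n : ℤ, Av G K w S = n := by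
      obtain ⟨I, -, e⟩ := exists_subsetMin (fKI G K) (S.erase w)
      obtain ⟨n, hn⟩ := fKI_int hsym hK I
      exact ⟨n, e.trans hn⟩
    obtain ⟨b, hb⟩ : ∃ n : ℤ, Bv G K w S = n := by
      obtain ⟨I, -, e⟩ := exists_subsetMin (fun I => fKI G K (insert w I)) (S.erase w)
      obtain ⟨n, hn⟩ := fKI_int hsym hK (insert w I)
      exact ⟨n, e.trans hn⟩
    rw [ha, hb] at hΔ ⊢
    rw [Int.cast_lt] at hΔ
    by_cases h : b < a
    · rw [if_pos (hΔ.2 h)]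
      -- integrality: `b < a` forces `1 + b ≤ a`
      have h1 : 1 + (b : ℚ) ≤ a := by exact_mod_cast (by omega : 1 + b ≤ a)
      rw [min_eq_right h1, min_eq_right (by linarith)]
      ring
    · rw [if_neg (fun h' => h (hΔ.1 h'))]
      have h1 : (a : ℚ) ≤ b := by exact_mod_cast not_lt.1 h
      rw [min_eq_left h1, min_eq_left (by linarith), add_zero]
  · have hΔ : ¬ DeltaTop G K w S < 0 := by simp [DeltaTop, hw]
    rw [if_neg hΔ, add_zero]
    rw [Finset.erase_eq_of_notMem hw] at hz
    exact subsetMin_congr fun I hI => by rw [hz I hI, add_zero]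

end Child

lemma mem_Esub {Γ : SimpleGraph V} {E : Finset V} {u v x : V} :
    x ∈ Esub Γ E u v ↔ x ∈ E ∧ onPath Γ x v u := by
  classical
  simp [Esub]

lemma graphOf_adj {G : Matrix V V ℤ} (hsym : G.IsSymm) {a b : V} :
    (graphOf G).Adj a b ↔ a ≠ b ∧ G a b = 1 := by
  rw [graphOf, SimpleGraph.fromRel_adj, hsym.apply, or_self]

end RecursiveDelta

open RecursiveDelta

/-- Lemma `recursiveDCalc`: for `u, v` in the same tree of a negative
definite forest and `u ∈ E`, `Δ_u^v[K,E] = f([K,{u}]) + γ_u^v[K,E]`, where `γ_u^v[K,E]`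
counts the neighbors `w` of `u` farther from `v` than `u` (i.e. whose path to `v` passes
through `u`) with `Δ_w^v[K,E] < 0` (with `Δ_w^v[K,E] = +∞` when `w ∉ E`). -/
theorem recursive_delta_calc [Fintype V] [DecidableEq V]
    (G : Matrix V V ℤ) (hsym : G.IsSymm) (hneg : MatNegDef G)
    (hoff : ∀ u w : V, u ≠ w → G u w = 0 ∨ G u w = 1)
    (hforest : (graphOf G).IsAcyclic)
    (K : V → ℤ) (hK : IsCharacteristic G K)
    (E : Finset V) (u v : V) (hreach : (graphOf G).Reachable u v) (hu : u ∈ E) :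
    DeltaTop G K u (Esub (graphOf G) E u v) =
      ((fKI G K {u} +
        ((@Finset.filter V
            (fun w => (graphOf G).Adj u w ∧ onPath (graphOf G) w v u ∧
              DeltaTop G K w (Esub (graphOf G) E w v) < (0 : WithTop ℚ))
            (Classical.decPred _) Finset.univ).card : ℚ)) : WithTop ℚ) := by
  classical
  set Γ := graphOf G with hΓ
  have hG0 : ∀ a b, a ≠ b → ¬ Γ.Adj a b → G a b = 0 := fun a b hab h =>
    (hoff a b hab).resolve_right fun h1 => h ((graphOf_adj hsym).2 ⟨hab, h1⟩)
  set W : Finset V := Finset.univ.filter fun w => Γ.Adj u w ∧ onPath Γ w v u with hW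
  have hWm : ∀ w, w ∈ W ↔ Γ.Adj u w ∧ onPath Γ w v u := fun w => by simp [hW]
  set D : V → Finset V := fun w => Esub Γ E w v with hDdef
  have hDm : ∀ w x, x ∈ D w ↔ x ∈ E ∧ onPath Γ x v w := fun w x => mem_Esub
  have huD : u ∈ D u := (hDm u u).2 ⟨hu, onPath_self hreach⟩
  have hdec : (D u).erase u = W.biUnion D := by
    ext x
    simp only [Finset.mem_erase, Finset.mem_biUnion, hWm, hDm]
    constructor
    · rintro ⟨hne, hxE, hx⟩
      obtain ⟨w, h₁, h₂, h₃⟩ := exists_child hx hne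
      exact ⟨w, ⟨h₁, h₂⟩, hxE, h₃⟩
    · rintro ⟨w, ⟨h₁, h₂⟩, hxE, h₃⟩
      refine ⟨?_, hxE, onPath_trans hforest h₃ h₂⟩
      rintro rfl
      exact h₁.ne (onPath_antisymm hforest h₃ h₂)
  -- the subtrees below distinct children are disjoint and not joined by edges
  have hsep : ∀ w ∈ W, ∀ w' ∈ W, w ≠ w' → ∀ i ∈ D w, ∀ j ∈ D w', i ≠ j ∧ G i j = 0 := by
    intro w hw w' hw' hne i hi j hj
    rw [hWm] at hw hw'
    rw [hDm] at hi hj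
    have hcom : ∀ x, onPath Γ x v w → onPath Γ x v w' → False := fun x h h' =>
      hne (child_unique hforest hw.1 hw.2 hw'.1 hw'.2 h h')
    have hij : i ≠ j := by
      rintro rfl
      exact hcom i hi.2 hj.2
    refine ⟨hij, hG0 i j hij fun ha => ?_⟩
    obtain ⟨p, -, -⟩ := hi.2
    rcases onPath_of_adj ⟨p⟩ ha with h | h
    · exact hcom i hi.2 (onPath_trans hforest h hj.2)
    · exact hcom j (onPath_trans hforest h hi.2) hj.2
  have hnb : ∀ w ∈ W, ∀ x ∈ D w, x ≠ w → G u x = 0 := by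
    intro w hw x hx hne
    rw [hWm] at hw
    rw [hDm] at hx
    have hxu : onPath Γ x v u := onPath_trans hforest hx.2 hw.2
    refine hG0 u x ?_ fun ha => hne ?_
    · rintro rfl
      exact hw.1.ne (onPath_antisymm hforest hx.2 hw.2)
    · have hr : Γ.Reachable x v := ⟨hx.2.choose⟩
      exact child_unique hforest ha hxu hw.1 hw.2 (onPath_self hr) hx.2
  have hfadd : ∀ I J : Finset V, (∀ i ∈ I, ∀ j ∈ J, i ≠ j ∧ G i j = 0) →
      Disjoint I J ∧ fKI G K (I ∪ J) = fKI G K I + fKI G K J := by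
    intro I J h
    have hd : Disjoint I J := Finset.disjoint_left.2 fun a ha hb => (h a ha a hb).1 rfl
    refine ⟨hd, ?_⟩
    rw [fKI_union hsym hd, Finset.sum_eq_zero, add_zero]
    exact fun i hi => Finset.sum_eq_zero fun j hj => by rw [(h i hi j hj).2, Int.cast_zero]
  have hf0 : fKI G K ∅ = 0 := by simp [fKI_eq]
  have hA : Av G K u (D u) = ∑ w ∈ W, subsetMin (fKI G K) (D w) := by
    change subsetMin (fKI G K) ((D u).erase u) = _
    rw [hdec]
    exact subsetMin_biUnion hf0 (fun I J h => (hfadd I J h).2) D W hsep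
  have hB : Bv G K u (D u) = fKI G K {u} +
      ∑ w ∈ W, subsetMin (fun I => fKI G K I + ∑ j ∈ I, (G u j : ℚ)) (D w) := by
    change subsetMin (fun I => fKI G K (insert u I)) ((D u).erase u) = _
    rw [← subsetMin_biUnion (R := fun i j => i ≠ j ∧ G i j = 0) (by simp [hf0]) ?_ D W hsep, ← hdec,
      ← subsetMin_add_const]
    · refine subsetMin_congr fun I hI => ?_
      rw [fKI_insert hsym fun h => (Finset.mem_erase.1 (hI h)).1 rfl, add_assoc]
    · intro I J h
      obtain ⟨hd, e⟩ := hfadd I J h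
      simp only [e, Finset.sum_union hd]
      ring
  have hchild : ∀ w ∈ W, subsetMin (fun I => fKI G K I + ∑ j ∈ I, (G u j : ℚ)) (D w) =
      subsetMin (fKI G K) (D w) + if DeltaTop G K w (D w) < 0 then 1 else 0 := fun w hw =>
    subsetMin_child hsym hK ((graphOf_adj hsym).1 ((hWm w).1 hw).1).2 (hnb w hw)
  have hcard : Finset.univ.filter (fun w => Γ.Adj u w ∧ onPath Γ w v u ∧
      DeltaTop G K w (Esub Γ E w v) < (0 : WithTop ℚ)) =
      W.filter fun w => DeltaTop G K w (D w) < 0 := by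
    ext w
    simp [hW, hDdef, and_assoc]
  have key : Bv G K u (D u) - Av G K u (D u) = fKI G K {u} +
      ((W.filter fun w => DeltaTop G K w (D w) < 0).card : ℚ) := by
    rw [hA, hB, Finset.sum_congr rfl hchild, Finset.sum_add_distrib, Finset.sum_boole]
    ring
  rw [DeltaTop, if_pos huD, key, ← hcard]
  norm_cast
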